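/- arXiv:2510.04099 — 4 statements merged into one kernel-verified Lean document; each statement's English description precedes it below -/
import Mathlib

section
/- Let m ≥ 3 and let e_1,…,e_m ∈ ℝ² be nonzero vectors which can be written e_j = ρ_j·(cos θ_j, sin θ_j) with ρ_j > 0 and 0 ≤ θ_1 ≤ θ_2 ≤ … ≤ θ_m < 2π (i.e. they are ordered counterclockwise), and assume ∑_{j=1}^m e_j = 0. Let v_0 = 0 and v_k = ∑_{j=1}^k e_j for k = 1,…,m−1, and let P be the convex hull of {v_0, v_1, …, v_{m−1}} (the convex polygon with edge vectors e_1,…,e_m). Then diam(P) = (1/2)·max{ ∑_{j=1}^m |⟨e_j,u⟩| : u ∈ ℝ², ‖u‖₂ = 1 }, where diam(P) = sup{‖x − y‖₂ : x,y ∈ P}. Consequently the diameter-to-perimeter ratio of P equals (max_{‖u‖₂=1} ∑_{j=1}^m |⟨e_j,u⟩|) / (2·∑_{j=1}^m ‖e_j‖₂). -/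
noncomputable section

open Real
open scoped RealInnerProductSpace ENNReal

/-- ℝ² as a Euclidean space. -/
abbrev E2 : Type := EuclideanSpace ℝ (Fin 2)

/-- The vector `(x, y)` in ℝ². -/
def vec2 (x y : ℝ) : E2 := (WithLp.equiv 2 (Fin 2 → ℝ)).symm ![x, y]

/-- The coordinates of a vector in ℝ². -/
def toFun2 (v : E2) : Fin 2 → ℝ := WithLp.equiv 2 (Fin 2 → ℝ) v

/-- The phaseless measurement map `Φ_A(x) = (|⟨a_j, x⟩|)_j`. -/
def PhiMap {m : ℕ} (a : Fin m → E2) (x : E2) : EuclideanSpace ℝ (Fin m) :=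
  (WithLp.equiv 2 (Fin m → ℝ)).symm fun j => |⟪a j, x⟫|

/-- The distance `dist(x,y) = min ‖x − y‖ ‖x + y‖` (real phase retrieval distance). -/
def pdist (x y : E2) : ℝ := min ‖x - y‖ ‖x + y‖

/-- The set of Lipschitz ratios of the phaseless measurement map. -/
def ratioSet {m : ℕ} (a : Fin m → E2) : Set ℝ :=
  {r | ∃ x y : E2, pdist x y ≠ 0 ∧ r = ‖PhiMap a x - PhiMap a y‖ / pdist x y}

/-- The optimal lower Lipschitz constant `L_A`. -/
def lipL {m : ℕ} (a : Fin m → E2) : ℝ := sInf (ratioSet a)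

/-- The optimal upper Lipschitz constant `U_A`. -/
def lipU {m : ℕ} (a : Fin m → E2) : ℝ := sSup (ratioSet a)

/-- The condition number `β_A = U_A / L_A`, with `β_A = +∞` when `L_A = 0`. -/
def condNum {m : ℕ} (a : Fin m → E2) : ℝ≥0∞ :=
  if lipL a = 0 then ⊤ else ENNReal.ofReal (lipU a / lipL a)

/-- An edge family: nonzero vectors with pairwise distinct directions summing to zero
(the edge vectors of a strictly convex polygon). -/
def IsEdgeFamily {m : ℕ} (e : Fin m → E2) : Prop :=
  (∀ j, e j ≠ 0) ∧
  (∀ i j : Fin m, i ≠ j → ‖e i‖⁻¹ • e i ≠ ‖e j‖⁻¹ • e j) ∧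
  ∑ j, e j = 0

/-- The diameter-to-perimeter ratio of the polygon with edge vectors `e`. -/
def rRatio {m : ℕ} (e : Fin m → E2) : ℝ :=
  sSup {s | ∃ u : E2, ‖u‖ = 1 ∧ s = ∑ j, |⟪e j, u⟫|} / (2 * ∑ j, ‖e j‖)

/-- An optimal edge family: minimizes `rRatio` among all edge families of size `m`. -/
def IsOptimalEdgeFamily {m : ℕ} (e : Fin m → E2) : Prop :=
  IsEdgeFamily e ∧ ∀ e' : Fin m → E2, IsEdgeFamily e' → rRatio e ≤ rRatio e'

/-- The complex square map on ℝ² ≅ ℂ: `f(t·(cos φ, sin φ)) = t²·(cos 2φ, sin 2φ)`. -/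
def csq (v : E2) : E2 :=
  vec2 (toFun2 v 0 ^ 2 - toFun2 v 1 ^ 2) (2 * toFun2 v 0 * toFun2 v 1)

/-- The harmonic frame `E_m`: the `j`-th row is `(cos((j−1)π/m), sin((j−1)π/m))`, `j = 1,…,m`. -/
def harmonicFrame (m : ℕ) : Fin m → E2 :=
  fun j => vec2 (Real.cos ((j : ℕ) * π / m)) (Real.sin ((j : ℕ) * π / m))

/-!
Fix a unit vector `u`. Since the edges sum to zero, `∑ j, |⟪e j, u⟫|` is at least
`2 * ∑ j ∈ A, ⟪e j, u⟫` for every set `A` of edges, with equality when `A` collects the edges on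
which `u` is nonnegative. Every difference of two vertices is `∑ j ∈ A, e j` for a block `A` of
consecutive edges; testing it against its own direction bounds the diameter from above. Conversely,
convexity makes the edges on which `u` (or `-u`) is nonnegative such a block, so the sum of
projections onto `u` is at most twice the distance of two vertices.
-/

section SumAbs

variable {ι R : Type*} [Fintype ι] [CommRing R] [LinearOrder R] [IsStrictOrderedRing R]
  {x : ι → R}

lemma two_mul_sum_le_sum_abs (hx : ∑ j, x j = 0) (A : Finset ι) :
    2 * ∑ j ∈ A, x j ≤ ∑ j, |x j| := by
  classical
  have hcompl := A.sum_add_sum_compl x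
  calc 2 * ∑ j ∈ A, x j = ∑ j ∈ A, x j - ∑ j ∈ Aᶜ, x j := by linarith
    _ ≤ |∑ j ∈ A, x j| + |∑ j ∈ Aᶜ, x j| := (le_abs_self _).trans (abs_sub _ _)
    _ ≤ ∑ j ∈ A, |x j| + ∑ j ∈ Aᶜ, |x j| :=
        add_le_add (A.abs_sum_le_sum_abs x) (Aᶜ.abs_sum_le_sum_abs x)
    _ = ∑ j, |x j| := A.sum_add_sum_compl _

lemma sum_abs_eq_two_mul_sum (hx : ∑ j, x j = 0) {A : Finset ι}
    (hnonneg : ∀ j ∈ A, 0 ≤ x j) (hnonpos : ∀ j ∉ A, x j ≤ 0) :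
    ∑ j, |x j| = 2 * ∑ j ∈ A, x j := by
  classical
  have hA : ∑ j ∈ A, |x j| = ∑ j ∈ A, x j :=
    Finset.sum_congr rfl fun j hj => abs_of_nonneg (hnonneg j hj)
  have hAc : ∑ j ∈ Aᶜ, |x j| = -∑ j ∈ Aᶜ, x j := by
    rw [← Finset.sum_neg_distrib]
    exact Finset.sum_congr rfl fun j hj => abs_of_nonpos (hnonpos j (Finset.mem_compl.mp hj))
  have hcompl := A.sum_add_sum_compl x
  rw [← A.sum_add_sum_compl, hA, hAc]
  linarith

end SumAbs

section Vertices

variable {ι V : Type*} [LinearOrder ι] [LocallyFiniteOrderBot ι]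

/-- The vertices of the polygonal path that starts at the origin and has edge vectors `e`. The
vertex with index `k` is the starting point of the edge `e k`, so a closed path lists each of its
vertices once. -/
def pathVertex [AddCommMonoid V] (e : ι → V) (k : ι) : V := ∑ j ∈ Finset.Iio k, e j

lemma pathVertex_sub_pathVertex [AddCommGroup V] (e : ι → V) {i k : ι} (hik : i ≤ k) :
    pathVertex e k - pathVertex e i = ∑ j ∈ Finset.Iio k \ Finset.Iio i, e j :=
  (Finset.sum_sdiff_eq_sub (Finset.Iio_subset_Iio hik)).symm

lemma exists_pathVertex_eq_sum_of_isLowerSet [Fintype ι] [Nonempty ι] [AddCommMonoid V]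
    {e : ι → V} (hsum : ∑ j, e j = 0) {s : Finset ι} (hs : IsLowerSet (s : Set ι)) :
    ∃ k, pathVertex e k = ∑ j ∈ s, e j := by
  obtain h_univ | ⟨k, hk⟩ := hs.eq_univ_or_Iio
  · obtain ⟨k, hk⟩ := Finite.exists_min (id : ι → ι)
    have h_empty : Finset.Iio k = ∅ := Finset.Iio_eq_empty.mpr fun j _ => hk j
    refine ⟨k, ?_⟩
    rw [pathVertex, h_empty, Finset.sum_empty, Finset.coe_eq_univ.mp h_univ, hsum]
  · refine ⟨k, ?_⟩
    rw [pathVertex, ← Finset.coe_inj.mp (hk.trans (Finset.coe_Iio k).symm)]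

lemma exists_pathVertex_sub_eq_sum_of_ordConnected [Fintype ι] [Nonempty ι] [AddCommGroup V]
    {e : ι → V} (hsum : ∑ j, e j = 0) {A : Finset ι} (hA : (A : Set ι).OrdConnected) :
    ∃ i k, pathVertex e k - pathVertex e i = ∑ j ∈ A, e j := by
  classical
  let L : Finset ι := {j | ∃ a ∈ A, j ≤ a}
  have hAL : A ⊆ L := fun a ha => by simpa [L] using ⟨a, ha, le_rfl⟩
  have hL : IsLowerSet (L : Set ι) := by
    intro a b hba ha
    obtain ⟨c, hc, hac⟩ : ∃ c ∈ A, a ≤ c := by simpa [L] using ha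
    simpa [L] using ⟨c, hc, hba.trans hac⟩
  have hLA : IsLowerSet ((L \ A : Finset ι) : Set ι) := by
    intro a b hba ha
    obtain ⟨haL, haA⟩ := Finset.mem_sdiff.mp ha
    obtain ⟨c, hc, hac⟩ : ∃ c ∈ A, a ≤ c := by simpa [L] using haL
    exact Finset.mem_sdiff.mpr ⟨hL hba haL, fun hb => haA (hA.out hb hc ⟨hba, hac⟩)⟩
  obtain ⟨k, hk⟩ := exists_pathVertex_eq_sum_of_isLowerSet hsum hL
  obtain ⟨i, hi⟩ := exists_pathVertex_eq_sum_of_isLowerSet hsum hLA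
  exact ⟨i, k, by rw [hk, hi, ← Finset.sum_sdiff hAL, add_sub_cancel_left]⟩

end Vertices

section ConvexOrder

variable {ι V : Type*} [Preorder ι] [NormedAddCommGroup V] [InnerProductSpace ℝ V]

/-- The edges that point to the positive side of `u` form a block of consecutive edges: the closed
path `e` rises along the direction `u` on that block and falls before and after it. Edges orthogonal
to `u` may be counted on either side. -/
def HasPositiveBlock (e : ι → V) (u : V) : Prop :=
  ∃ A : Set ι, A.OrdConnected ∧ (∀ j ∈ A, 0 ≤ ⟪e j, u⟫) ∧ ∀ j ∉ A, ⟪e j, u⟫ ≤ 0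

/-- The edges `e` are in convex position order, as are the counterclockwise ordered edges of a
convex polygon: along every direction the closed path rises once and falls once. Because the edges
are indexed linearly rather than cyclically, only one of `u` and `-u` need have its positive edges
in a single block. -/
def IsConvexlyOrdered (e : ι → V) : Prop :=
  ∀ u : V, ‖u‖ = 1 → HasPositiveBlock e u ∨ HasPositiveBlock e (-u)

end ConvexOrder

section Diameter

variable {ι V : Type*} [Fintype ι] [NormedAddCommGroup V] [InnerProductSpace ℝ V] {e : ι → V}

/-- The total lengths of the projections of the vectors `e` onto lines. The supremum of this set is
the right-hand side of the diameter formula, up to the factor `1 / 2`. -/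
def projectionSums (e : ι → V) : Set ℝ := {s | ∃ u : V, ‖u‖ = 1 ∧ s = ∑ j, |⟪e j, u⟫|}

lemma bddAbove_projectionSums (e : ι → V) : BddAbove (projectionSums e) := by
  refine ⟨∑ j, ‖e j‖, ?_⟩
  rintro _ ⟨u, hu, rfl⟩
  exact Finset.sum_le_sum fun j _ => by simpa [hu] using abs_real_inner_le_norm (e j) u

lemma sSup_projectionSums_nonneg (e : ι → V) : 0 ≤ sSup (projectionSums e) :=
  Real.sSup_nonneg <| by
    rintro _ ⟨u, -, rfl⟩
    positivity

lemma sum_inner_eq_zero (hsum : ∑ j, e j = 0) (u : V) : ∑ j, ⟪e j, u⟫ = 0 := by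
  rw [← sum_inner, hsum, inner_zero_left]

lemma two_mul_norm_sum_le_sSup_projectionSums (hsum : ∑ j, e j = 0) (A : Finset ι) :
    2 * ‖∑ j ∈ A, e j‖ ≤ sSup (projectionSums e) := by
  set w := ∑ j ∈ A, e j
  obtain h_zero | h_ne := eq_or_ne w 0
  · simpa [h_zero] using sSup_projectionSums_nonneg e
  set u := ‖w‖⁻¹ • w with hu
  have hu_norm : ‖u‖ = 1 := norm_smul_inv_norm h_ne
  have hwu : ⟪w, u⟫ = ‖w‖ := by
    rw [hu, real_inner_smul_right, real_inner_self_eq_norm_mul_norm,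
      inv_mul_cancel_left₀ (norm_ne_zero_iff.mpr h_ne)]
  calc 2 * ‖w‖ = 2 * ∑ j ∈ A, ⟪e j, u⟫ := by rw [← hwu, ← sum_inner]
    _ ≤ ∑ j, |⟪e j, u⟫| := two_mul_sum_le_sum_abs (sum_inner_eq_zero hsum u) A
    _ ≤ sSup (projectionSums e) := le_csSup (bddAbove_projectionSums e) ⟨u, hu_norm, rfl⟩

variable [LinearOrder ι] [LocallyFiniteOrderBot ι]

lemma two_mul_diam_range_pathVertex_le (hsum : ∑ j, e j = 0) :
    2 * Metric.diam (Set.range (pathVertex e)) ≤ sSup (projectionSums e) := by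
  have h_norm : ∀ i k, i ≤ k →
      ‖pathVertex e k - pathVertex e i‖ ≤ sSup (projectionSums e) / 2 := fun i k hik => by
    rw [pathVertex_sub_pathVertex e hik, le_div_iff₀' two_pos]
    exact two_mul_norm_sum_le_sSup_projectionSums hsum _
  rw [← le_div_iff₀' two_pos]
  refine Metric.diam_le_of_forall_dist_le
    (div_nonneg (sSup_projectionSums_nonneg e) zero_le_two) ?_
  rintro _ ⟨i, rfl⟩ _ ⟨k, rfl⟩
  obtain hik | hki := le_total i k
  · exact (dist_eq_norm' _ _).trans_le (h_norm i k hik)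
  · exact (dist_eq_norm _ _).trans_le (h_norm k i hki)

lemma HasPositiveBlock.sum_abs_inner_le_two_mul_diam [Nonempty ι] (hsum : ∑ j, e j = 0) {u : V}
    (hu : ‖u‖ = 1) (h : HasPositiveBlock e u) :
    ∑ j, |⟪e j, u⟫| ≤ 2 * Metric.diam (Set.range (pathVertex e)) := by
  obtain ⟨A, hA, hnonneg, hnonpos⟩ := h
  lift A to Finset ι using A.toFinite
  obtain ⟨i, k, hik⟩ := exists_pathVertex_sub_eq_sum_of_ordConnected hsum hA
  calc ∑ j, |⟪e j, u⟫| = 2 * ∑ j ∈ A, ⟪e j, u⟫ :=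
        sum_abs_eq_two_mul_sum (sum_inner_eq_zero hsum u) hnonneg hnonpos
    _ = 2 * ⟪pathVertex e k - pathVertex e i, u⟫ := by rw [hik, sum_inner]
    _ ≤ 2 * dist (pathVertex e k) (pathVertex e i) := by
        gcongr
        simpa [hu, dist_eq_norm] using real_inner_le_norm (pathVertex e k - pathVertex e i) u
    _ ≤ 2 * Metric.diam (Set.range (pathVertex e)) := by
        gcongr
        exact Metric.dist_le_diam_of_mem (Set.finite_range _).isBounded
          (Set.mem_range_self k) (Set.mem_range_self i)

lemma IsConvexlyOrdered.sSup_projectionSums_le [Nonempty ι] (hsum : ∑ j, e j = 0)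
    (h : IsConvexlyOrdered e) :
    sSup (projectionSums e) ≤ 2 * Metric.diam (Set.range (pathVertex e)) := by
  refine Real.sSup_le ?_ (mul_nonneg zero_le_two Metric.diam_nonneg)
  rintro _ ⟨u, hu, rfl⟩
  obtain h_pos | h_neg := h u hu
  · exact h_pos.sum_abs_inner_le_two_mul_diam hsum hu
  · simpa only [inner_neg_right, abs_neg] using
      h_neg.sum_abs_inner_le_two_mul_diam hsum ((norm_neg u).trans hu)

theorem stmt2_general [Nonempty ι] (hsum : ∑ j, e j = 0) (h : IsConvexlyOrdered e) :
    Metric.diam (convexHull ℝ (Set.range (pathVertex e))) =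
      (1 / 2) * sSup (projectionSums e) ∧
    Metric.diam (convexHull ℝ (Set.range (pathVertex e))) / (∑ j, ‖e j‖) =
      sSup (projectionSums e) / (2 * ∑ j, ‖e j‖) := by
  have h_diam : 2 * Metric.diam (convexHull ℝ (Set.range (pathVertex e))) =
      sSup (projectionSums e) := by
    rw [convexHull_diam]
    exact (two_mul_diam_range_pathVertex_le hsum).antisymm (h.sSup_projectionSums_le hsum)
  rw [← h_diam, mul_div_mul_left _ _ two_ne_zero]
  exact ⟨by ring, rfl⟩

end Diameter

section Plane

lemma inner_vec2_cos_sin (θ ψ : ℝ) :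
    ⟪vec2 (cos θ) (sin θ), vec2 (cos ψ) (sin ψ)⟫ = cos (θ - ψ) := by
  simp only [vec2, WithLp.equiv_symm_apply, PiLp.inner_apply, Fin.sum_univ_two,
    Matrix.cons_val_zero, Matrix.cons_val_one, RCLike.inner_apply, conj_trivial, cos_sub]
  ring

lemma exists_vec2_cos_sin_eq_or_eq_neg {u : E2} (hu : ‖u‖ = 1) :
    ∃ ψ ∈ Set.Icc (π / 2) (3 * π / 2),
      u = vec2 (cos ψ) (sin ψ) ∨ -u = vec2 (cos ψ) (sin ψ) := by
  wlog hu0 : u 0 ≤ 0 generalizing u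
  · obtain ⟨ψ, hψ, h⟩ := this ((norm_neg u).trans hu) (by simpa using (not_le.mp hu0).le)
    exact ⟨ψ, hψ, by simpa only [neg_neg] using h.symm⟩
  have h_sq : u 0 ^ 2 + u 1 ^ 2 = 1 := by
    rw [← Fin.sum_univ_two fun i => u i ^ 2, ← EuclideanSpace.real_norm_sq_eq, hu, one_pow]
  have h_sin : sin (arcsin (u 1)) = u 1 := sin_arcsin (by nlinarith) (by nlinarith)
  have h_cos : cos (arcsin (u 1)) = -u 0 := by
    rw [cos_arcsin, ← h_sq, add_sub_cancel_right, sqrt_sq_eq_abs, abs_of_nonpos hu0]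
  refine ⟨π - arcsin (u 1), ⟨?_, ?_⟩, Or.inl ?_⟩
  · linarith [arcsin_le_pi_div_two (u 1)]
  · linarith [neg_pi_div_two_le_arcsin (u 1)]
  · rw [cos_pi_sub, sin_pi_sub, h_cos, h_sin, neg_neg]
    ext i
    fin_cases i <;> rfl

variable {ι : Type*} [Preorder ι] {e : ι → E2} {ρ θ : ι → ℝ}

lemma hasPositiveBlock_vec2_cos_sin (hρ : ∀ j, 0 ≤ ρ j)
    (he : ∀ j, e j = ρ j • vec2 (cos (θ j)) (sin (θ j))) (hmono : Monotone θ)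
    (hθ : ∀ j, θ j ∈ Set.Icc 0 (2 * π)) {ψ : ℝ} (hψ : ψ ∈ Set.Icc (π / 2) (3 * π / 2)) :
    HasPositiveBlock e (vec2 (cos ψ) (sin ψ)) := by
  have h_inner : ∀ j, ⟪e j, vec2 (cos ψ) (sin ψ)⟫ = ρ j * cos (θ j - ψ) := fun j => by
    rw [he, real_inner_smul_left, inner_vec2_cos_sin]
  let A : Set ι := θ ⁻¹' Set.Icc (ψ - π / 2) (ψ + π / 2)
  have h_mem : ∀ j, j ∈ A ↔ |θ j - ψ| ≤ π / 2 := fun j => by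
    rw [Set.mem_preimage, ← Real.closedBall_eq_Icc, Metric.mem_closedBall, Real.dist_eq]
  refine ⟨A, Set.ordConnected_Icc.preimage_mono hmono, fun j hj => ?_, fun j hj => ?_⟩
  · rw [h_inner, ← cos_abs]
    exact mul_nonneg (hρ j) <| cos_nonneg_of_neg_pi_div_two_le_of_le
      (by linarith [pi_pos, abs_nonneg (θ j - ψ)]) ((h_mem j).mp hj)
  · have h_far : π / 2 < |θ j - ψ| := not_le.mp fun h => hj ((h_mem j).mpr h)
    have h_near : |θ j - ψ| ≤ π + π / 2 :=
      abs_le.mpr ⟨by linarith [(hθ j).1, hψ.2], by linarith [(hθ j).2, hψ.1]⟩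
    rw [h_inner, ← cos_abs]
    exact mul_nonpos_of_nonneg_of_nonpos (hρ j) <|
      cos_nonpos_of_pi_div_two_le_of_le h_far.le h_near

lemma isConvexlyOrdered_of_monotone_angle (hρ : ∀ j, 0 ≤ ρ j)
    (he : ∀ j, e j = ρ j • vec2 (cos (θ j)) (sin (θ j))) (hmono : Monotone θ)
    (hθ : ∀ j, θ j ∈ Set.Icc 0 (2 * π)) : IsConvexlyOrdered e := by
  intro u hu
  obtain ⟨ψ, hψ, h | h⟩ := exists_vec2_cos_sin_eq_or_eq_neg hu
  · exact Or.inl (h ▸ hasPositiveBlock_vec2_cos_sin hρ he hmono hθ hψ)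
  · exact Or.inr (h ▸ hasPositiveBlock_vec2_cos_sin hρ he hmono hθ hψ)

end Plane

/-- The diameter of a convex polygon with counterclockwise-ordered edge
vectors `e_1, …, e_m` summing to zero equals half the maximal total projection of the
edge vectors, and consequently its diameter-to-perimeter ratio equals
`max_{‖u‖=1} ∑ |⟨e_j,u⟩| / (2 ∑ ‖e_j‖)`. -/
theorem stmt2 {m : ℕ} (hm : 3 ≤ m) (e : Fin m → E2) (ρ θ : Fin m → ℝ)
    (hρ : ∀ j, 0 < ρ j)
    (he : ∀ j, e j = ρ j • vec2 (Real.cos (θ j)) (Real.sin (θ j)))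
    (hθ0 : 0 ≤ θ ⟨0, by omega⟩)
    (hmono : Monotone θ)
    (hθlt : ∀ j, θ j < 2 * π)
    (hsum : ∑ j, e j = 0)
    (P : Set E2)
    (hP : P = convexHull ℝ (Set.range fun k : Fin m => ∑ j ∈ Finset.Iio k, e j)) :
    Metric.diam P = (1 / 2) * sSup {s | ∃ u : E2, ‖u‖ = 1 ∧ s = ∑ j, |⟪e j, u⟫|} ∧
    Metric.diam P / (∑ j, ‖e j‖) =
      sSup {s | ∃ u : E2, ‖u‖ = 1 ∧ s = ∑ j, |⟪e j, u⟫|} / (2 * ∑ j, ‖e j‖) := by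
  subst hP
  have : NeZero m := ⟨by omega⟩
  have hθ (j : Fin m) : θ j ∈ Set.Icc 0 (2 * π) :=
    ⟨hθ0.trans (hmono (Fin.zero_le j)), (hθlt j).le⟩
  exact stmt2_general hsum
    (isConvexlyOrdered_of_monotone_angle (fun j => (hρ j).le) he hmono hθ)
end
end

section
/- Let z_1,…,z_m ∈ ℂ and let a_j ∈ ℝ² be the vector corresponding to z_j under the identification ℝ² ≅ ℂ. Then ∑_{j=1}^m a_j a_jᵀ = C·I₂ with C = (1/2)·∑_{j=1}^m |z_j|² holds if and only if ∑_{j=1}^m z_j² = 0. In other words, a family of vectors in ℝ² is a tight frame (up to the degenerate all-zero case) exactly when the sum of the squares of the corresponding complex numbers vanishes. -/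
noncomputable section

open Real
open scoped RealInnerProductSpace ENNReal

/-!
For a vector `v ∈ ℝ²` with complex coordinate `z`, the matrix `v vᵀ` splits into its scalar part
`(|z|² / 2) I₂` and its traceless part, and the latter depends on `z²` alone, linearly and
injectively. Summing over a family, the scalar parts add up to the asserted multiple of `I₂`, so
the tight frame identity says precisely that the traceless matrix attached to `∑ z_j²` vanishes.
-/

theorem toFun2_vec2 (x y : ℝ) : toFun2 (vec2 x y) = ![x, y] := rfl

/-- The matrix of the real-linear map `u ↦ w * conj u` of `ℂ` in the basis `(1, i)`, as a linear
function of `w`. Its values are the traceless symmetric matrices, so it parametrizes the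
traceless parts of symmetric `2 × 2` matrices by complex numbers. -/
def mulConjMatrix : ℂ →ₗ[ℝ] Matrix (Fin 2) (Fin 2) ℝ where
  toFun w := !![w.re, w.im; w.im, -w.re]
  map_add' w₁ w₂ := by simp [add_comm]
  map_smul' c w := by simp

theorem mulConjMatrix_apply (w : ℂ) : mulConjMatrix w = !![w.re, w.im; w.im, -w.re] := rfl

theorem mulConjMatrix_injective : Function.Injective mulConjMatrix := fun _ _ h =>
  Complex.ext (congrFun₂ h 0 0) (congrFun₂ h 0 1)

theorem vecMulVec_re_im_self (z : ℂ) :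
    Matrix.vecMulVec ![z.re, z.im] ![z.re, z.im] =
      ((1 / 2) * ‖z‖ ^ 2) • (1 : Matrix (Fin 2) (Fin 2) ℝ) +
        (1 / 2 : ℝ) • mulConjMatrix (z ^ 2) := by
  have norm_sq : ‖z‖ ^ 2 = z.re * z.re + z.im * z.im := by
    rw [Complex.sq_norm, Complex.normSq_apply]
  have re_sq : (z ^ 2).re = z.re * z.re - z.im * z.im := by rw [sq, Complex.mul_re]
  have im_sq : (z ^ 2).im = 2 * (z.re * z.im) := by rw [sq, Complex.mul_im]; ring
  rw [mulConjMatrix_apply, norm_sq, re_sq, im_sq]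
  ext i j
  fin_cases i <;> fin_cases j <;> simp [Matrix.vecMulVec_apply] <;> ring

theorem sum_vecMulVec_re_im_self {ι : Type*} (s : Finset ι) (z : ι → ℂ) :
    ∑ j ∈ s, Matrix.vecMulVec ![(z j).re, (z j).im] ![(z j).re, (z j).im] =
      ((1 / 2) * ∑ j ∈ s, ‖z j‖ ^ 2) • (1 : Matrix (Fin 2) (Fin 2) ℝ) +
        (1 / 2 : ℝ) • mulConjMatrix (∑ j ∈ s, z j ^ 2) := by
  simp only [vecMulVec_re_im_self, Finset.sum_add_distrib, Finset.mul_sum, Finset.sum_smul,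
    Finset.smul_sum, map_sum]

theorem stmt3_general {ι : Type*} (s : Finset ι) (z : ι → ℂ) (a : ι → E2)
    (ha : ∀ j ∈ s, a j = vec2 (z j).re (z j).im) :
    (∑ j ∈ s, Matrix.vecMulVec (toFun2 (a j)) (toFun2 (a j)) =
        ((1 / 2) * ∑ j ∈ s, ‖z j‖ ^ 2) • (1 : Matrix (Fin 2) (Fin 2) ℝ)) ↔
      ∑ j ∈ s, (z j) ^ 2 = 0 := by
  have frame_sum : ∑ j ∈ s, Matrix.vecMulVec (toFun2 (a j)) (toFun2 (a j)) =
      ∑ j ∈ s, Matrix.vecMulVec ![(z j).re, (z j).im] ![(z j).re, (z j).im] :=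
    Finset.sum_congr rfl fun j hj => by rw [ha j hj, toFun2_vec2]
  rw [frame_sum, sum_vecMulVec_re_im_self, add_eq_left, smul_eq_zero_iff_right (by norm_num),
    map_eq_zero_iff mulConjMatrix mulConjMatrix_injective]

/-- Under the identification ℝ² ≅ ℂ, the vectors `a_j` corresponding to
complex numbers `z_j` form a tight frame `∑ a_j a_jᵀ = C·I₂` with
`C = (1/2)·∑ |z_j|²` if and only if `∑ z_j² = 0`. -/
theorem stmt3 {m : ℕ} (z : Fin m → ℂ) (a : Fin m → E2)
    (ha : ∀ j, a j = vec2 (z j).re (z j).im) :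
    (∑ j, Matrix.vecMulVec (toFun2 (a j)) (toFun2 (a j)) =
        ((1 / 2) * ∑ j, ‖z j‖ ^ 2) • (1 : Matrix (Fin 2) (Fin 2) ℝ)) ↔
      ∑ j, (z j) ^ 2 = 0 :=
  stmt3_general Finset.univ z a fun j _ => ha j
end
end

section
/- Let z_1,…,z_m ∈ ℂ and let a_j ∈ ℝ² be the vector corresponding to z_j under the identification ℝ² ≅ ℂ. Then max{ ∑_{j=1}^m |⟨a_j,x⟩|·|⟨a_j,y⟩| : x,y ∈ ℝ², ‖x‖₂ = ‖y‖₂ = 1, ⟨x,y⟩ = 0 } = (1/2)·max{ ∑_{j=1}^m |Re(z_j²·conj(w))| : w ∈ ℂ, |w| = 1 }. -/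
noncomputable section

open Real
open scoped RealInnerProductSpace ENNReal

/-!
For complex `z`, `x`, `y`, put `α = z conj x` and `β = z conj y`. The identity
`2 Re α Re β = Re (α β) + Re (α conj β)` reads
`2 ⟪z, x⟫ ⟪z, y⟫ = Re (z² conj (x y)) + |z|² ⟪x, y⟫`, and the last term vanishes when `x ⟂ y`.
So an orthonormal pair `(x, y)` contributes half the value of the unimodular number `w = x y`.
Every unimodular `w` arises in this way: take `x` with `x² = -i w` and `y = i x`.
-/

open scoped ComplexConjugate Pointwise

lemma inner_mul_inner_eq_re_sq_mul_conj_mul (z x y : ℂ) :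
    ⟪z, x⟫ * ⟪z, y⟫ = 1 / 2 * ((z ^ 2 * conj (x * y)).re + ‖z‖ ^ 2 * ⟪x, y⟫) := by
  rw [Complex.sq_norm, Complex.normSq_apply]
  simp only [Complex.inner, sq, map_mul, Complex.mul_re, Complex.mul_im, Complex.conj_re,
    Complex.conj_im]
  ring

lemma exists_orthonormal_mul_eq {w : ℂ} (hw : ‖w‖ = 1) :
    ∃ x y : ℂ, ‖x‖ = 1 ∧ ‖y‖ = 1 ∧ ⟪x, y⟫ = 0 ∧ x * y = w := by
  obtain ⟨x, hx⟩ := IsAlgClosed.exists_eq_mul_self (-Complex.I * w)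
  have norm_x : ‖x‖ = 1 := by
    have norm_sq : ‖x‖ ^ 2 = 1 := by simp [sq, ← norm_mul, ← hx, hw]
    exact (pow_eq_one_iff_of_nonneg (norm_nonneg x) two_ne_zero).1 norm_sq
  refine ⟨x, Complex.I * x, norm_x, by simp [norm_x], ?_, ?_⟩
  · simp only [Complex.inner, mul_assoc, Complex.mul_conj, Complex.re_mul_ofReal, Complex.I_re,
      zero_mul]
  · calc x * (Complex.I * x) = Complex.I * (x * x) := by ring
      _ = -(Complex.I * Complex.I) * w := by rw [← hx]; ring
      _ = w := by simp

section Fintype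

variable {ι : Type*} [Fintype ι] (z : ι → ℂ)

lemma sum_abs_inner_mul_abs_inner_of_inner_eq_zero {x y : ℂ} (hxy : ⟪x, y⟫ = 0) :
    ∑ j, |⟪z j, x⟫| * |⟪z j, y⟫| = 1 / 2 * ∑ j, |(z j ^ 2 * conj (x * y)).re| := by
  rw [Finset.mul_sum]
  refine Finset.sum_congr rfl fun j _ => ?_
  rw [← abs_mul, inner_mul_inner_eq_re_sq_mul_conj_mul, hxy, mul_zero, add_zero, abs_mul,
    abs_of_pos one_half_pos]

lemma setOf_sum_abs_inner_mul_abs_inner_eq_smul :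
    {s | ∃ x y : ℂ, ‖x‖ = 1 ∧ ‖y‖ = 1 ∧ ⟪x, y⟫ = 0 ∧ s = ∑ j, |⟪z j, x⟫| * |⟪z j, y⟫|} =
      (1 / 2 : ℝ) • {s | ∃ w : ℂ, ‖w‖ = 1 ∧ s = ∑ j, |(z j ^ 2 * conj w).re|} := by
  ext s
  rw [Set.mem_smul_set]
  constructor
  · rintro ⟨x, y, hx, hy, hxy, rfl⟩
    exact ⟨_, ⟨x * y, by rw [norm_mul, hx, hy, one_mul], rfl⟩,
      (sum_abs_inner_mul_abs_inner_of_inner_eq_zero z hxy).symm⟩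
  · rintro ⟨_, ⟨w, hw, rfl⟩, rfl⟩
    obtain ⟨x, y, hx, hy, hxy, rfl⟩ := exists_orthonormal_mul_eq hw
    exact ⟨x, y, hx, hy, hxy, (sum_abs_inner_mul_abs_inner_of_inner_eq_zero z hxy).symm⟩

theorem stmt4_general {E : Type*} [NormedAddCommGroup E] [InnerProductSpace ℝ E]
    (L : ℂ ≃ₗᵢ[ℝ] E) :
    sSup {s | ∃ x y : E, ‖x‖ = 1 ∧ ‖y‖ = 1 ∧ ⟪x, y⟫ = 0 ∧
        s = ∑ j, |⟪L (z j), x⟫| * |⟪L (z j), y⟫|} =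
      1 / 2 * sSup {s | ∃ w : ℂ, ‖w‖ = 1 ∧ s = ∑ j, |(z j ^ 2 * conj w).re|} := by
  simp only [L.surjective.exists, L.norm_map, L.inner_map_map]
  rw [setOf_sum_abs_inner_mul_abs_inner_eq_smul, Real.sSup_smul_of_nonneg one_half_pos.le,
    smul_eq_mul]

end Fintype

lemma vec2_re_im_eq_repr (z : ℂ) : vec2 z.re z.im = Complex.orthonormalBasisOneI.repr z :=
  (WithLp.equiv 2 (Fin 2 → ℝ)).symm_apply_eq.2 (Complex.orthonormalBasisOneI_repr_apply z).symm

/-- Under the identification ℝ² ≅ ℂ, with `a_j ∈ ℝ²` corresponding to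
`z_j ∈ ℂ`, the maximum of `∑ |⟨a_j,x⟩|·|⟨a_j,y⟩|` over orthonormal pairs `x, y` equals
half the maximum of `∑ |Re(z_j²·conj w)|` over unimodular `w`. -/
theorem stmt4 {m : ℕ} (z : Fin m → ℂ) (a : Fin m → E2)
    (ha : ∀ j, a j = vec2 (z j).re (z j).im) :
    sSup {s | ∃ x y : E2, ‖x‖ = 1 ∧ ‖y‖ = 1 ∧ ⟪x, y⟫ = 0 ∧
        s = ∑ j, |⟪a j, x⟫| * |⟪a j, y⟫|} =
      (1 / 2) * sSup {s | ∃ w : ℂ, ‖w‖ = 1 ∧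
        s = ∑ j, |((z j) ^ 2 * (starRingEnd ℂ) w).re|} := by
  simpa only [ha, vec2_re_im_eq_repr] using stmt4_general z Complex.orthonormalBasisOneI.repr
end
end

section
/- Let m ≥ 3 and let a_1,…,a_m ∈ T, where T = {t·(cos φ, sin φ) : t ≥ 0, φ ∈ (0, π]} is the upper half-plane excluding the positive x-axis. Set A = [a_1,…,a_m]ᵀ ∈ ℝ^{m×2} and e_j = f(a_j). Then the following are equivalent: (1) ∑_{j=1}^m a_j a_jᵀ is a positive scalar multiple of I₂ and β_A = inf{β_M : M ∈ ℝ^{m×2}} (i.e. {a_1,…,a_m} is an optimal tight frame); (2) (e_1,…,e_m) is an optimal edge family of size m. Moreover, in either case β_A = (1 − 2·r(e))^{−1/2}. -/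
noncomputable section

open Real
open scoped RealInnerProductSpace ENNReal

/-!
Identify `ℝ²` with `ℂ` and write `w_j = a_j²`. The frame `a` is tight exactly when the `w_j` are
the edges of a closed polygon, with perimeter `P = ∑ ‖w_j‖` and diameter `D / 2`, where
`D = max_{‖u‖ = 1} ∑ |⟪w_j, u⟫|`. In the coordinates `u = x - y`, `v = x + y` the squared increment
`‖Φ(x) - Φ(y)‖²` is `∑ min (⟪a_j, u⟫²) (⟪a_j, v⟫²)`, and for a tight frame the half-angle formula
turns it, when `‖u‖ = ‖v‖`, into `(P ‖u‖² - ½ ∑ |⟪w_j, u² - v²⟫|) / 2`. Hence `U² = P / 2`,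
`L² = (P - D) / 2`, and `β = (1 - D / P)^(-1/2)` is a strictly increasing function of the ratio
`r = D / (2 P)`.

A frame with `L > 0` that is not tight becomes tight after a linear change of variable, which does
not increase `β`. So minimizing `β` amounts to minimizing `r` over all closed polygons, where a
minimizer exists by compactness. A minimizer has no vanishing or parallel edges: bending two edges
with sum `s` on a common ray into `s / 2 ± h`, for a small `h` orthogonal to `s`, increases the
perimeter but not the diameter, because `∑ |⟪w_j, u⟫|` is far from its maximum `D` wherever
`|⟪s, u⟫|` is small. The last point rests on a quantitative estimate: if
`q(v) + |⟪s, v⟫| ≤ D ‖v‖` for all `v`, then `q² ≤ D² - ‖s‖²` on the unit ball.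
-/

section Polygon

variable {ι E : Type*} [Fintype ι]

/-- The edge vectors of a closed polygon, possibly with some vanishing or parallel edges: the
relaxation of edge families over which minimizers exist by compactness. -/
structure IsClosedPolygon [AddCommMonoid E] (e : ι → E) : Prop where
  sum_eq_zero : ∑ j, e j = 0
  ne_zero : e ≠ 0

/-- The perimeter of the polygon with edge vectors `e j`. -/
def perimeter [Norm E] (e : ι → E) : ℝ := ∑ j, ‖e j‖

lemma perimeter_nonneg [SeminormedAddGroup E] (e : ι → E) : 0 ≤ perimeter e :=
  Finset.sum_nonneg fun _ _ => norm_nonneg _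

lemma perimeter_pos [NormedAddGroup E] {e : ι → E} (he : e ≠ 0) : 0 < perimeter e := by
  obtain ⟨j, hj⟩ := Function.ne_iff.1 he
  exact Finset.sum_pos' (fun _ _ => norm_nonneg _) ⟨j, Finset.mem_univ j, norm_pos_iff.2 hj⟩

lemma perimeter_smul [SeminormedAddCommGroup E] [NormedSpace ℝ E] (c : ℝ) (e : ι → E) :
    perimeter (c • e) = |c| * perimeter e := by
  simp [perimeter, norm_smul, Finset.mul_sum]

end Polygon

section Zonotope

variable {ι E : Type*} [Fintype ι] [NormedAddCommGroup E] [InnerProductSpace ℝ E]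

/-- The support function `u ↦ ∑ j, |⟪e j, u⟫|` of the zonotope `∑ j, [-e j, e j]`, bundled as a
seminorm to make its convexity and homogeneity available. -/
def zonoSupport (e : ι → E) : Seminorm ℝ E := ∑ j, (innerₛₗ ℝ (e j)).toSeminorm

/-- The circumradius of the zonotope `∑ j, [-e j, e j]`. If the `e j` are the edges of a convex
polygon, this zonotope is twice the difference body of the polygon, so that its circumradius is
twice the diameter. -/
def zonoRadius (e : ι → E) : ℝ := ⨆ u : Metric.sphere (0 : E) 1, zonoSupport e u

/-- The diameter-to-perimeter ratio `rRatio` for edge vectors in any inner product space. -/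
def diamRatio (e : ι → E) : ℝ := zonoRadius e / (2 * perimeter e)

lemma zonoSupport_apply (e : ι → E) (u : E) : zonoSupport e u = ∑ j, |⟪e j, u⟫| := by
  simp [zonoSupport]

lemma zonoSupport_smul (c : ℝ) (e : ι → E) (u : E) :
    zonoSupport (c • e) u = |c| * zonoSupport e u := by
  simp [zonoSupport_apply, real_inner_smul_left, abs_mul, Finset.mul_sum]

lemma zonoSupport_le_perimeter_mul_norm (e : ι → E) (u : E) :
    zonoSupport e u ≤ perimeter e * ‖u‖ := by
  rw [zonoSupport_apply, perimeter, Finset.sum_mul]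
  exact Finset.sum_le_sum fun j _ => abs_real_inner_le_norm _ _

lemma zonoRadius_nonneg (e : ι → E) : 0 ≤ zonoRadius e :=
  Real.iSup_nonneg fun _ => apply_nonneg _ _

lemma zonoRadius_le {e : ι → E} {K : ℝ} (hK : 0 ≤ K)
    (h : ∀ u : E, ‖u‖ = 1 → zonoSupport e u ≤ K) : zonoRadius e ≤ K :=
  Real.iSup_le (fun u => h u (norm_eq_of_mem_sphere u)) hK

lemma zonoRadius_le_perimeter (e : ι → E) : zonoRadius e ≤ perimeter e :=
  zonoRadius_le (perimeter_nonneg e) fun u hu => by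
    simpa [hu] using zonoSupport_le_perimeter_mul_norm e u

lemma zonoRadius_smul (c : ℝ) (e : ι → E) : zonoRadius (c • e) = |c| * zonoRadius e := by
  simp only [zonoRadius, zonoSupport_smul, Real.mul_iSup_of_nonneg (abs_nonneg c)]

lemma diamRatio_smul {c : ℝ} (hc : c ≠ 0) (e : ι → E) : diamRatio (c • e) = diamRatio e := by
  rw [diamRatio, zonoRadius_smul, perimeter_smul, mul_left_comm,
    mul_div_mul_left _ _ (abs_ne_zero.2 hc), diamRatio]

lemma bddAbove_range_zonoSupport_sphere (e : ι → E) :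
    BddAbove (Set.range fun u : Metric.sphere (0 : E) 1 => zonoSupport e u) := by
  refine ⟨perimeter e, ?_⟩
  rintro _ ⟨u, rfl⟩
  simpa using zonoSupport_le_perimeter_mul_norm e u

lemma zonoSupport_le_zonoRadius_mul_norm (e : ι → E) (v : E) :
    zonoSupport e v ≤ zonoRadius e * ‖v‖ := by
  rcases eq_or_ne v 0 with rfl | hv
  · simp
  have hunit : zonoSupport e (‖v‖⁻¹ • v) ≤ zonoRadius e :=
    le_ciSup (bddAbove_range_zonoSupport_sphere e)
      ⟨‖v‖⁻¹ • v, by simpa using norm_smul_inv_norm (𝕜 := ℝ) hv⟩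
  rwa [map_smul_eq_mul, norm_inv, norm_norm, inv_mul_le_iff₀ (norm_pos_iff.2 hv),
    mul_comm] at hunit

lemma zonoRadius_pos {e : ι → E} (he : e ≠ 0) : 0 < zonoRadius e := by
  obtain ⟨j, hj⟩ := Function.ne_iff.1 he
  have hpos : 0 < ‖e j‖ := norm_pos_iff.2 hj
  have hle : |⟪e j, e j⟫| ≤ zonoSupport e (e j) := by
    rw [zonoSupport_apply]
    exact Finset.single_le_sum (f := fun k => |⟪e k, e j⟫|) (fun _ _ => abs_nonneg _)
      (Finset.mem_univ j)
  rw [real_inner_self_eq_norm_sq, abs_of_nonneg (sq_nonneg _)] at hle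
  refine pos_of_mul_pos_left ((pow_pos hpos 2).trans_le ?_) hpos.le
  exact hle.trans (zonoSupport_le_zonoRadius_mul_norm e (e j))

lemma lowerSemicontinuous_zonoRadius : LowerSemicontinuous (zonoRadius : (ι → E) → ℝ) := by
  refine lowerSemicontinuous_ciSup bddAbove_range_zonoSupport_sphere fun u => ?_
  simp only [zonoSupport_apply]
  exact Continuous.lowerSemicontinuous (by fun_prop)

lemma isCompact_setOf_sum_eq_zero_and_perimeter_eq_one [FiniteDimensional ℝ E] :
    IsCompact {e : ι → E | ∑ j, e j = 0 ∧ perimeter e = 1} := by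
  have : ProperSpace E := FiniteDimensional.proper_real E
  refine Metric.isCompact_of_isClosed_isBounded ?_ ?_
  · exact (isClosed_eq (by fun_prop) continuous_const).inter
      (isClosed_eq (by unfold perimeter; fun_prop) continuous_const)
  · refine Metric.isBounded_closedBall (x := 0) (r := 1) |>.subset fun e he => ?_
    rw [mem_closedBall_zero_iff, pi_norm_le_iff_of_nonneg zero_le_one, ← he.2]
    exact fun j => Finset.single_le_sum (fun _ _ => norm_nonneg _) (Finset.mem_univ j)

theorem exists_isMinOn_diamRatio [FiniteDimensional ℝ E] (h : ∃ e : ι → E, IsClosedPolygon e) :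
    ∃ e : ι → E, IsClosedPolygon e ∧ IsMinOn diamRatio {e | IsClosedPolygon e} e := by
  have normalize (e : ι → E) (he : IsClosedPolygon e) :
      ∑ j, ((perimeter e)⁻¹ • e) j = 0 ∧ perimeter ((perimeter e)⁻¹ • e) = 1 := by
    have hP := perimeter_pos he.ne_zero
    refine ⟨by simp [← Finset.smul_sum, he.sum_eq_zero], ?_⟩
    rw [perimeter_smul, abs_of_pos (inv_pos.2 hP), inv_mul_cancel₀ hP.ne']
  obtain ⟨e₀, he₀⟩ := h
  obtain ⟨e, ⟨hsum, hP⟩, hmin⟩ := LowerSemicontinuousOn.exists_isMinOn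
    (s := {e : ι → E | ∑ j, e j = 0 ∧ perimeter e = 1}) ⟨_, normalize e₀ he₀⟩
    isCompact_setOf_sum_eq_zero_and_perimeter_eq_one
    (lowerSemicontinuous_zonoRadius.lowerSemicontinuousOn _)
  refine ⟨e, ⟨hsum, by rintro rfl; simp [perimeter] at hP⟩, isMinOn_iff.2 fun e' he' => ?_⟩
  obtain ⟨hsum', hP'⟩ := normalize e' he'
  rw [← diamRatio_smul (inv_ne_zero (perimeter_pos he'.ne_zero).ne') e', diamRatio, diamRatio, hP,
    hP']
  gcongr
  exact isMinOn_iff.1 hmin _ ⟨hsum', hP'⟩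

/- Evaluate the hypothesis at `q u • u ± s` and add: convexity bounds the left side from below by
`2 * (q u ^ 2 + ‖s‖ ^ 2)`, the parallelogram law bounds the norms from above. -/
theorem sq_add_norm_sq_le_sq_of_forall_add_abs_inner_le {q : Seminorm ℝ E} {s : E} {D : ℝ}
    (h : ∀ v, q v + |⟪s, v⟫| ≤ D * ‖v‖) {u : E} (hu : ‖u‖ ≤ 1) :
    q u ^ 2 + ‖s‖ ^ 2 ≤ D ^ 2 := by
  set R := q u
  set S := R ^ 2 + ‖s‖ ^ 2
  set xp := R • u + s
  set xm := R • u - s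
  have hR : 0 ≤ R := apply_nonneg q u
  have hq : 2 * R ^ 2 ≤ q xp + q xm := by
    have hadd : xp + xm = (2 * R) • u := by module
    calc 2 * R ^ 2 = q (xp + xm) := by
          rw [hadd, map_smul_eq_mul, Real.norm_of_nonneg (mul_nonneg zero_le_two hR)]; ring
      _ ≤ q xp + q xm := map_add_le_add q xp xm
  have hs : 2 * ‖s‖ ^ 2 ≤ |⟪s, xp⟫| + |⟪s, xm⟫| := by
    have hsub : xp - xm = (2 : ℝ) • s := by module
    calc 2 * ‖s‖ ^ 2 = |⟪s, xp - xm⟫| := by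
          rw [hsub, real_inner_smul_right, real_inner_self_eq_norm_sq,
            abs_of_nonneg (by positivity)]
      _ ≤ |⟪s, xp⟫| + |⟪s, xm⟫| := by rw [inner_sub_right]; exact abs_sub _ _
  have hnorm : (‖xp‖ + ‖xm‖) ^ 2 ≤ 4 * S := by
    have hpar := parallelogram_law_with_norm ℝ (R • u) s
    have hRu : ‖R • u‖ ^ 2 ≤ R ^ 2 := by
      rw [norm_smul, mul_pow, norm_eq_abs, sq_abs]
      exact mul_le_of_le_one_right (sq_nonneg _) (pow_le_one₀ (norm_nonneg _) hu)
    linarith [sq_nonneg (‖xp‖ - ‖xm‖)]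
  have hS : S * S ≤ D ^ 2 * S := by
    have : (2 * S) ^ 2 ≤ D ^ 2 * (4 * S) := by
      calc (2 * S) ^ 2 ≤ (D * (‖xp‖ + ‖xm‖)) ^ 2 :=
            pow_le_pow_left₀ (by positivity) (by linarith [h xp, h xm]) 2
        _ = D ^ 2 * (‖xp‖ + ‖xm‖) ^ 2 := mul_pow _ _ _
        _ ≤ D ^ 2 * (4 * S) := by gcongr
    linarith
  rcases (show 0 ≤ S by positivity).eq_or_lt with hS0 | hS0
  · rw [← hS0]; positivity
  · exact le_of_mul_le_mul_right hS hS0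

lemma abs_inner_add_abs_inner_of_sameRay {x y : E} (h : SameRay ℝ x y) (u : E) :
    |⟪x, u⟫| + |⟪y, u⟫| = |⟪x + y, u⟫| := by
  obtain ⟨w, p, q, hp, hq, -, rfl, rfl⟩ := h.exists_eq_smul
  rw [← add_smul]
  simp only [real_inner_smul_left, abs_mul, abs_of_nonneg hp, abs_of_nonneg hq,
    abs_of_nonneg (add_nonneg hp hq)]
  ring

lemma abs_inner_half_smul_add_add_abs_inner_half_smul_sub_le (s h u : E) :
    |⟪(1 / 2 : ℝ) • s + h, u⟫| + |⟪(1 / 2 : ℝ) • s - h, u⟫| ≤ max |⟪s, u⟫| (2 * |⟪h, u⟫|) := by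
  rw [inner_add_left, inner_sub_left, real_inner_smul_left]
  grind

lemma norm_lt_norm_add_of_inner_eq_zero {x y : E} (hxy : ⟪x, y⟫ = 0) (hy : y ≠ 0) :
    ‖x‖ < ‖x + y‖ := by
  refine lt_of_pow_lt_pow_left₀ 2 (norm_nonneg _) ?_
  rw [norm_add_sq_real, hxy]
  have := norm_pos_iff.2 hy
  nlinarith

lemma norm_lt_norm_half_smul_add_add_norm_half_smul_sub {s h : E} (hsh : ⟪s, h⟫ = 0)
    (hh : h ≠ 0) : ‖s‖ < ‖(1 / 2 : ℝ) • s + h‖ + ‖(1 / 2 : ℝ) • s - h‖ := by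
  have hadd := norm_lt_norm_add_of_inner_eq_zero (x := (1 / 2 : ℝ) • s) (y := h)
    (by rw [real_inner_smul_left, hsh, mul_zero]) hh
  have hsub := norm_lt_norm_add_of_inner_eq_zero (x := (1 / 2 : ℝ) • s) (y := -h)
    (by rw [inner_neg_right, real_inner_smul_left, hsh, mul_zero, neg_zero]) (neg_ne_zero.2 hh)
  rw [← sub_eq_add_neg] at hsub
  rw [norm_smul] at hadd hsub
  norm_num at hadd hsub
  linarith

lemma exists_norm_eq_inner_eq_zero (hE : 1 < Module.rank ℝ E) (s : E) {r : ℝ} (hr : 0 ≤ r) :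
    ∃ h : E, ‖h‖ = r ∧ ⟪s, h⟫ = 0 := by
  have hne : (ℝ ∙ s)ᗮ ≠ ⊥ := by
    rw [Ne, Submodule.orthogonal_eq_bot_iff]
    intro htop
    have := rank_span_le (R := ℝ) {s}
    rw [htop, rank_top, Cardinal.mk_singleton] at this
    exact this.not_gt hE
  have := (Submodule.nontrivial_iff_ne_bot).2 hne
  obtain ⟨h, hh⟩ := exists_norm_eq ((ℝ ∙ s)ᗮ) hr
  exact ⟨h, hh, Submodule.mem_orthogonal_singleton_iff_inner_right.1 h.2⟩

end Zonotope

section ReplacePair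

variable {ι E : Type*} [DecidableEq ι]

/-- The family `e` with its members at `i` and `j` replaced by `x` and `y`: the move by which two
parallel edges of a polygon are bent apart. -/
def replacePair (e : ι → E) (i j : ι) (x y : E) : ι → E :=
  Function.update (Function.update e i x) j y

variable [Fintype ι] {M : Type*} [AddCommGroup M]

lemma sum_apply_update (g : E → M) (e : ι → E) (i : ι) (x : E) :
    ∑ l, g (Function.update e i x l) = ∑ l, g (e l) - g (e i) + g x := by
  have hsum := Finset.sum_update_of_mem (Finset.mem_univ i) (g ∘ e) (g x)
  rw [← Function.comp_update, Finset.sdiff_singleton_eq_erase] at hsum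
  rw [← Finset.sum_erase_eq_sub (Finset.mem_univ i), add_comm]
  exact hsum

lemma sum_apply_replacePair (g : E → M) (e : ι → E) {i j : ι} (hij : i ≠ j) (x y : E) :
    ∑ l, g (replacePair e i j x y l) = ∑ l, g (e l) - (g (e i) + g (e j)) + (g x + g y) := by
  rw [replacePair, sum_apply_update, sum_apply_update, Function.update_of_ne hij.symm]
  abel

end ReplacePair

section SplitEdge

variable {ι E : Type*} [Fintype ι] [NormedAddCommGroup E] [InnerProductSpace ℝ E]

lemma zonoSupport_eq_replacePair_zero_add_abs_inner [DecidableEq ι] {e : ι → E} {i j : ι}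
    (hij : i ≠ j) (hray : SameRay ℝ (e i) (e j)) (u : E) :
    zonoSupport e u = zonoSupport (replacePair e i j 0 0) u + |⟪e i + e j, u⟫| := by
  have := sum_apply_replacePair (|⟪·, u⟫|) e hij 0 0
  simp only [inner_zero_left, abs_zero, abs_inner_add_abs_inner_of_sameRay hray] at this
  simp only [zonoSupport_apply, this]
  ring

lemma zonoRadius_replacePair_le [DecidableEq ι] {e : ι → E} {i j : ι} (hij : i ≠ j)
    (hray : SameRay ℝ (e i) (e j)) {h : E}
    (hh : 2 * ‖h‖ ≤ zonoRadius e - √(zonoRadius e ^ 2 - ‖e i + e j‖ ^ 2)) :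
    zonoRadius (replacePair e i j ((1 / 2 : ℝ) • (e i + e j) + h) ((1 / 2 : ℝ) • (e i + e j) - h)) ≤
      zonoRadius e := by
  refine zonoRadius_le (zonoRadius_nonneg e) fun u hu => ?_
  set s := e i + e j
  set D := zonoRadius e
  set rest := zonoSupport (replacePair e i j 0 0)
  have hsupport := zonoSupport_eq_replacePair_zero_add_abs_inner hij hray
  have hle (v : E) : rest v + |⟪s, v⟫| ≤ D * ‖v‖ :=
    (hsupport v).symm.trans_le (zonoSupport_le_zonoRadius_mul_norm e v)
  have hrest : rest u ≤ √(D ^ 2 - ‖s‖ ^ 2) := Real.le_sqrt_of_sq_le <| by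
    linarith [sq_add_norm_sq_le_sq_of_forall_add_abs_inner_le hle hu.le]
  have hhu : |⟪h, u⟫| ≤ ‖h‖ := by simpa [hu] using abs_real_inner_le_norm h u
  calc zonoSupport (replacePair e i j ((1 / 2 : ℝ) • s + h) ((1 / 2 : ℝ) • s - h)) u
      = rest u + (|⟪(1 / 2 : ℝ) • s + h, u⟫| + |⟪(1 / 2 : ℝ) • s - h, u⟫|) := by
        rw [zonoSupport_apply, sum_apply_replacePair (|⟪·, u⟫|) e hij,
          abs_inner_add_abs_inner_of_sameRay hray, ← zonoSupport_apply, hsupport,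
          add_sub_cancel_right]
    _ ≤ rest u + max |⟪s, u⟫| (2 * |⟪h, u⟫|) := by
        gcongr
        exact abs_inner_half_smul_add_add_abs_inner_half_smul_sub_le s h u
    _ ≤ D := by
        rw [← max_add_add_left]
        exact max_le (by simpa [hu] using hle u) (by linarith)

theorem exists_perimeter_lt_zonoRadius_le (hE : 1 < Module.rank ℝ E) (e : ι → E) {i j : ι}
    (hij : i ≠ j) (hray : SameRay ℝ (e i) (e j)) (hs : e i + e j ≠ 0) :
    ∃ e' : ι → E, ∑ l, e' l = ∑ l, e l ∧ perimeter e < perimeter e' ∧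
      zonoRadius e' ≤ zonoRadius e := by
  classical
  set s := e i + e j with hs_def
  set D := zonoRadius e with hD_def
  have hD : 0 < D := zonoRadius_pos fun he => hs (by simp [s, he])
  have hgap : √(D ^ 2 - ‖s‖ ^ 2) < D := by
    rw [Real.sqrt_lt' hD]
    linarith [pow_pos (norm_pos_iff.2 hs) 2]
  obtain ⟨h, hh, hsh⟩ := exists_norm_eq_inner_eq_zero hE s
    (r := (D - √(D ^ 2 - ‖s‖ ^ 2)) / 2) (by linarith)
  have hh0 : h ≠ 0 := norm_pos_iff.1 (by rw [hh]; linarith)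
  refine ⟨replacePair e i j ((1 / 2 : ℝ) • s + h) ((1 / 2 : ℝ) • s - h), ?_, ?_,
    zonoRadius_replacePair_le hij hray (by rw [← hs_def, ← hD_def]; linarith)⟩
  · rw [sum_apply_replacePair (fun x => x) e hij]
    module
  · rw [perimeter, perimeter, sum_apply_replacePair (‖·‖) e hij, ← hray.norm_add]
    linarith [norm_lt_norm_half_smul_add_add_norm_half_smul_sub hsh hh0]

end SplitEdge

section Minimizer

variable {ι E : Type*} [Fintype ι] [NormedAddCommGroup E] [InnerProductSpace ℝ E]

theorem not_sameRay_of_isMinOn_diamRatio (hE : 1 < Module.rank ℝ E) {e : ι → E}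
    (he : IsClosedPolygon e) (hmin : IsMinOn diamRatio {e | IsClosedPolygon e} e) {i j : ι}
    (hij : i ≠ j) (hs : e i + e j ≠ 0) : ¬SameRay ℝ (e i) (e j) := by
  classical
  intro hray
  obtain ⟨e', hsum, hP, hD⟩ := exists_perimeter_lt_zonoRadius_le hE e hij hray hs
  have hpos := perimeter_pos he.ne_zero
  have hclosed : IsClosedPolygon e' :=
    ⟨hsum.trans he.sum_eq_zero, by rintro rfl; simp [perimeter] at hP hpos; linarith⟩
  refine (isMinOn_iff.1 hmin e' hclosed).not_gt ?_
  calc diamRatio e' ≤ zonoRadius e / (2 * perimeter e') := by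
        unfold diamRatio; have := perimeter_nonneg e'; gcongr
    _ < diamRatio e := by
        have := zonoRadius_pos he.ne_zero
        unfold diamRatio; gcongr

lemma apply_ne_zero_of_isMinOn_diamRatio (hE : 1 < Module.rank ℝ E) {e : ι → E}
    (he : IsClosedPolygon e) (hmin : IsMinOn diamRatio {e | IsClosedPolygon e} e) (i : ι) :
    e i ≠ 0 := by
  intro hi
  obtain ⟨j, hj⟩ := Function.ne_iff.1 he.ne_zero
  refine not_sameRay_of_isMinOn_diamRatio hE he hmin (i := i) (j := j) ?_ ?_ ?_
  · rintro rfl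
    exact hj hi
  · rwa [hi, zero_add]
  · rw [hi]
    exact SameRay.zero_left _

end Minimizer

section EdgeFamily

variable {m : ℕ} {e : Fin m → E2}

lemma rRatio_eq_diamRatio (e : Fin m → E2) : rRatio e = diamRatio e := by
  rw [rRatio, diamRatio, perimeter, zonoRadius, ← sSup_range]
  congr 2
  ext s
  simp [zonoSupport_apply, eq_comm]

lemma two_mul_rRatio_le_one (e : Fin m → E2) : 2 * rRatio e ≤ 1 := by
  rw [rRatio_eq_diamRatio, diamRatio, mul_div_assoc', mul_div_mul_left _ _ two_ne_zero]
  exact div_le_one_of_le₀ (zonoRadius_le_perimeter e) (perimeter_nonneg e)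

lemma IsEdgeFamily.isClosedPolygon (he : IsEdgeFamily e) (hm : m ≠ 0) : IsClosedPolygon e where
  sum_eq_zero := he.2.2
  ne_zero h := he.1 ⟨0, Nat.pos_of_ne_zero hm⟩ (by rw [h, Pi.zero_apply])

lemma one_lt_rank_E2 : 1 < Module.rank ℝ E2 := by
  rw [← Module.finrank_eq_rank, finrank_euclideanSpace_fin]
  norm_num

theorem isEdgeFamily_of_isMinOn_rRatio (he : IsClosedPolygon e)
    (hmin : IsMinOn rRatio {e | IsClosedPolygon e} e) : IsEdgeFamily e := by
  rw [funext rRatio_eq_diamRatio] at hmin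
  have hne := apply_ne_zero_of_isMinOn_diamRatio one_lt_rank_E2 he hmin
  refine ⟨hne, fun i j hij hdir => ?_, he.sum_eq_zero⟩
  have hray : SameRay ℝ (e i) (e j) := (sameRay_iff_inv_norm_smul_eq_of_ne (hne i) (hne j)).2 hdir
  refine not_sameRay_of_isMinOn_diamRatio one_lt_rank_E2 he hmin hij ?_ hray
  have hi := norm_pos_iff.2 (hne i)
  rw [← norm_pos_iff, hray.norm_add]
  positivity

theorem isOptimalEdgeFamily_iff (hm : m ≠ 0) : IsOptimalEdgeFamily e ↔
    IsClosedPolygon e ∧ IsMinOn rRatio {e | IsClosedPolygon e} e := by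
  constructor
  · rintro ⟨he, hopt⟩
    have hclosed := he.isClosedPolygon hm
    obtain ⟨e₀, he₀, hmin⟩ := exists_isMinOn_diamRatio ⟨e, hclosed⟩
    rw [← funext rRatio_eq_diamRatio] at hmin
    have hle := hopt e₀ (isEdgeFamily_of_isMinOn_rRatio he₀ hmin)
    exact ⟨hclosed, fun e' he' => hle.trans (isMinOn_iff.1 hmin e' he')⟩
  · rintro ⟨he, hmin⟩
    exact ⟨isEdgeFamily_of_isMinOn_rRatio he hmin,
      fun e' he' => isMinOn_iff.1 hmin e' (he'.isClosedPolygon hm)⟩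

end EdgeFamily

section ComplexSquare

lemma inner_E2 (x y : E2) : ⟪x, y⟫ = x 0 * y 0 + x 1 * y 1 := by
  simp [PiLp.inner_apply, Fin.sum_univ_two, mul_comm]

lemma norm_sq_E2 (x : E2) : ‖x‖ ^ 2 = x 0 ^ 2 + x 1 ^ 2 := by
  simp [EuclideanSpace.norm_sq_eq, Fin.sum_univ_two]

lemma csq_apply_zero (v : E2) : csq v 0 = v 0 ^ 2 - v 1 ^ 2 := by
  simp [csq, vec2, toFun2]

lemma csq_apply_one (v : E2) : csq v 1 = 2 * v 0 * v 1 := by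
  simp [csq, vec2, toFun2]

lemma norm_csq (v : E2) : ‖csq v‖ = ‖v‖ ^ 2 := by
  refine (sq_eq_sq₀ (norm_nonneg _) (sq_nonneg _)).1 ?_
  rw [norm_sq_E2, norm_sq_E2, csq_apply_zero, csq_apply_one]
  ring

/- The half-angle formula `cos² θ = (1 + cos 2θ) / 2`, with `θ` the angle between `b` and `u`. -/
lemma inner_sq_eq_half_add_inner_csq (b u : E2) :
    ⟪b, u⟫ ^ 2 = (‖csq b‖ * ‖u‖ ^ 2 + ⟪csq b, csq u⟫) / 2 := by
  rw [norm_csq, norm_sq_E2, norm_sq_E2, inner_E2, inner_E2]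
  simp only [csq_apply_zero, csq_apply_one]
  ring

lemma csq_surjective : Function.Surjective csq := by
  intro w
  obtain ⟨z, hz⟩ := IsAlgClosed.exists_pow_nat_eq (⟨w 0, w 1⟩ : ℂ) two_pos
  have hre := congrArg Complex.re hz
  have him := congrArg Complex.im hz
  simp only [pow_two, Complex.mul_re, Complex.mul_im] at hre him
  refine ⟨vec2 z.re z.im, ?_⟩
  ext i
  fin_cases i
  · simpa [csq_apply_zero, vec2, pow_two] using hre
  · simp only [Fin.mk_one, Fin.isValue, csq_apply_one, ← him]
    simp [vec2]
    ring

lemma exists_norm_eq_one_csq_eq {w : E2} (hw : ‖w‖ = 1) : ∃ u : E2, ‖u‖ = 1 ∧ csq u = w := by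
  obtain ⟨u, rfl⟩ := csq_surjective w
  exact ⟨u, by rwa [norm_csq, pow_eq_one_iff_of_nonneg (norm_nonneg _) two_ne_zero] at hw, rfl⟩

lemma sum_inner_sq_eq {ι : Type*} [Fintype ι] (b : ι → E2) (x : E2) :
    ∑ j, ⟪b j, x⟫ ^ 2 =
      (perimeter (csq ∘ b) * ‖x‖ ^ 2 + ⟪∑ j, csq (b j), csq x⟫) / 2 := by
  simp only [inner_sq_eq_half_add_inner_csq, ← Finset.sum_div, Finset.sum_add_distrib,
    ← Finset.sum_mul, ← sum_inner]
  rfl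

lemma vecMulVec_toFun2_eq (v : E2) : Matrix.vecMulVec (toFun2 v) (toFun2 v) =
    (‖csq v‖ / 2) • (1 : Matrix (Fin 2) (Fin 2) ℝ) +
      (1 / 2 : ℝ) • !![csq v 0, csq v 1; csq v 1, -csq v 0] := by
  rw [norm_csq, norm_sq_E2]
  ext i k
  fin_cases i <;> fin_cases k <;>
    simp [Matrix.vecMulVec_apply, toFun2, csq_apply_zero, csq_apply_one] <;> ring

end ComplexSquare

section Tight

variable {ι : Type*} [Fintype ι]

lemma sum_csq_eq_zero_of_forall_sum_inner_sq_eq {b : ι → E2} {C : ℝ}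
    (h : ∀ x, ∑ j, ⟪b j, x⟫ ^ 2 = C * ‖x‖ ^ 2) : ∑ j, csq (b j) = 0 := by
  set S := ∑ j, csq (b j) with hS
  obtain ⟨x, hx⟩ := csq_surjective S
  obtain ⟨y, hy⟩ := csq_surjective (-S)
  have hxS := sum_inner_sq_eq b x
  have hyS := sum_inner_sq_eq b y
  rw [h, ← norm_csq, ← hS, hx, real_inner_self_eq_norm_sq] at hxS
  rw [h, ← norm_csq, ← hS, hy, inner_neg_right, norm_neg, real_inner_self_eq_norm_sq] at hyS
  have hzero : ‖S‖ ^ 2 = 0 := by linarith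
  exact norm_eq_zero.1 (pow_eq_zero_iff two_ne_zero |>.1 hzero)

lemma sum_inner_sq_eq_of_sum_csq_eq_zero {b : ι → E2} (h : ∑ j, csq (b j) = 0) (x : E2) :
    ∑ j, ⟪b j, x⟫ ^ 2 = perimeter (csq ∘ b) / 2 * ‖x‖ ^ 2 := by
  rw [sum_inner_sq_eq, h, inner_zero_left]
  ring

lemma sum_vecMulVec_toFun2_eq (b : ι → E2) :
    ∑ j, Matrix.vecMulVec (toFun2 (b j)) (toFun2 (b j)) =
      (perimeter (csq ∘ b) / 2) • (1 : Matrix (Fin 2) (Fin 2) ℝ) +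
        (1 / 2 : ℝ) • !![(∑ j, csq (b j)) 0, (∑ j, csq (b j)) 1;
          (∑ j, csq (b j)) 1, -(∑ j, csq (b j)) 0] := by
  simp only [vecMulVec_toFun2_eq, Finset.sum_add_distrib, ← Finset.sum_smul, ← Finset.smul_sum,
    ← Finset.sum_div]
  congr 2
  ext i k
  fin_cases i <;> fin_cases k <;> simp [Matrix.sum_apply]

theorem exists_sum_vecMulVec_eq_smul_one_iff (b : ι → E2) :
    (∃ C : ℝ, 0 < C ∧ ∑ j, Matrix.vecMulVec (toFun2 (b j)) (toFun2 (b j)) =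
      C • (1 : Matrix (Fin 2) (Fin 2) ℝ)) ↔ IsClosedPolygon (csq ∘ b) := by
  rw [sum_vecMulVec_toFun2_eq]
  set P := perimeter (csq ∘ b) with hP
  set S := ∑ j, csq (b j)
  constructor
  · rintro ⟨C, hC, h⟩
    have h00 : P / 2 + 2⁻¹ * S 0 = C := by simpa using congrFun₂ h 0 0
    have h11 : P / 2 - 2⁻¹ * S 0 = C := by simpa [sub_eq_add_neg] using congrFun₂ h 1 1
    have h01 : S 1 = 0 := by simpa using congrFun₂ h 0 1
    refine ⟨?_, fun h0 => ?_⟩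
    · change S = 0
      ext i
      fin_cases i
      · change S 0 = 0
        linarith
      · exact h01
    · have : P = 0 := by rw [hP, h0]; simp [perimeter]
      linarith
  · intro h
    refine ⟨P / 2, half_pos (perimeter_pos h.ne_zero), ?_⟩
    rw [show S = 0 from h.sum_eq_zero]
    ext i k
    fin_cases i <;> fin_cases k <;> simp

end Tight

section Lipschitz

variable {m : ℕ} {a : Fin m → E2} {c : ℝ}

/-- The squared increment `‖Φ_a(x) - Φ_a(y)‖²` in the coordinates `u = x - y`, `v = x + y`, in which
`dist(x, y) = min ‖u‖ ‖v‖`. -/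
def minSqSum {ι : Type*} [Fintype ι] (a : ι → E2) (u v : E2) : ℝ :=
  ∑ j, min (⟪a j, u⟫ ^ 2) (⟪a j, v⟫ ^ 2)

lemma minSqSum_nonneg (a : Fin m → E2) (u v : E2) : 0 ≤ minSqSum a u v :=
  Finset.sum_nonneg fun _ _ => le_min (sq_nonneg _) (sq_nonneg _)

lemma minSqSum_self (a : Fin m → E2) (u : E2) : minSqSum a u u = ∑ j, ⟪a j, u⟫ ^ 2 := by
  simp only [minSqSum, min_self]

lemma minSqSum_le_left (a : Fin m → E2) (u v : E2) : minSqSum a u v ≤ ∑ j, ⟪a j, u⟫ ^ 2 :=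
  Finset.sum_le_sum fun _ _ => min_le_left _ _

lemma minSqSum_le_right (a : Fin m → E2) (u v : E2) : minSqSum a u v ≤ ∑ j, ⟪a j, v⟫ ^ 2 :=
  Finset.sum_le_sum fun _ _ => min_le_right _ _

lemma minSqSum_smul_smul_le (a : Fin m → E2) (u v : E2) {s t : ℝ} (hs : |s| ≤ 1) (ht : |t| ≤ 1) :
    minSqSum a (s • u) (t • v) ≤ minSqSum a u v := by
  refine Finset.sum_le_sum fun j _ => ?_
  rw [inner_smul_right, inner_smul_right, mul_pow, mul_pow]
  exact min_le_min (mul_le_of_le_one_left (sq_nonneg _) ((sq_le_one_iff_abs_le_one s).2 hs))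
    (mul_le_of_le_one_left (sq_nonneg _) ((sq_le_one_iff_abs_le_one t).2 ht))

lemma abs_sub_abs_sq_eq_min (p q : ℝ) : (|p| - |q|) ^ 2 = min ((p - q) ^ 2) ((p + q) ^ 2) := by
  rw [sub_sq, sq_abs, sq_abs, mul_assoc, ← abs_mul]
  grind

lemma norm_phiMap_sub_phiMap (a : Fin m → E2) (x y : E2) :
    ‖PhiMap a x - PhiMap a y‖ = √(minSqSum a (x - y) (x + y)) := by
  simp [EuclideanSpace.norm_eq, PhiMap, minSqSum, inner_sub_right, inner_add_right,
    abs_sub_abs_sq_eq_min]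

lemma ratioSet_eq (a : Fin m → E2) : ratioSet a =
    {r | ∃ u v : E2, min ‖u‖ ‖v‖ ≠ 0 ∧ r = √(minSqSum a u v) / min ‖u‖ ‖v‖} := by
  ext r
  simp only [ratioSet, pdist, norm_phiMap_sub_phiMap, Set.mem_ofPred_eq]
  constructor
  · rintro ⟨x, y, h⟩
    exact ⟨x - y, x + y, h⟩
  · rintro ⟨u, v, h⟩
    have hsub : (1 / 2 : ℝ) • (v + u) - (1 / 2 : ℝ) • (v - u) = u := by module
    have hadd : (1 / 2 : ℝ) • (v + u) + (1 / 2 : ℝ) • (v - u) = v := by module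
    exact ⟨(1 / 2 : ℝ) • (v + u), (1 / 2 : ℝ) • (v - u), by rwa [hsub, hadd]⟩

lemma ratioSet_nonempty (a : Fin m → E2) : (ratioSet a).Nonempty := by
  obtain ⟨u, hu⟩ := exists_norm_eq E2 zero_le_one
  rw [ratioSet_eq]
  exact ⟨_, u, u, by simp [hu], rfl⟩

lemma nonneg_of_mem_ratioSet {r : ℝ} (hr : r ∈ ratioSet a) : 0 ≤ r := by
  obtain ⟨x, y, -, rfl⟩ := hr
  exact div_nonneg (norm_nonneg _) (le_min (norm_nonneg _) (norm_nonneg _))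

lemma lipL_nonneg (a : Fin m → E2) : 0 ≤ lipL a :=
  Real.sInf_nonneg fun _ => nonneg_of_mem_ratioSet

lemma lipU_nonneg (a : Fin m → E2) : 0 ≤ lipU a :=
  Real.sSup_nonneg fun _ => nonneg_of_mem_ratioSet

theorem le_lipL_iff (hc : 0 ≤ c) :
    c ≤ lipL a ↔ ∀ u v, c ^ 2 * min ‖u‖ ‖v‖ ^ 2 ≤ minSqSum a u v := by
  rw [lipL, le_csInf_iff ⟨0, fun _ => nonneg_of_mem_ratioSet⟩ (ratioSet_nonempty a), ratioSet_eq]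
  constructor
  · intro h u v
    rcases (show 0 ≤ min ‖u‖ ‖v‖ by positivity).eq_or_lt with h0 | hpos
    · simpa [← h0] using minSqSum_nonneg a u v
    · rw [← mul_pow, ← Real.le_sqrt (by positivity) (minSqSum_nonneg a u v), ← le_div_iff₀ hpos]
      exact h _ ⟨u, v, hpos.ne', rfl⟩
  · rintro h _ ⟨u, v, h0, rfl⟩
    rw [le_div_iff₀ (by positivity), Real.le_sqrt (by positivity) (minSqSum_nonneg a u v), mul_pow]
    exact h u v

lemma forall_mem_ratioSet_le_iff (hc : 0 ≤ c) :
    (∀ r ∈ ratioSet a, r ≤ c) ↔ ∀ u, ∑ j, ⟪a j, u⟫ ^ 2 ≤ c ^ 2 * ‖u‖ ^ 2 := by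
  rw [ratioSet_eq]
  constructor
  · intro h u
    rcases eq_or_ne u 0 with rfl | hu
    · simp
    · have := h _ ⟨u, u, by simpa using hu, rfl⟩
      rwa [min_self, div_le_iff₀ (by positivity), Real.sqrt_le_left (by positivity), mul_pow,
        minSqSum_self] at this
  · rintro h _ ⟨u, v, h0, rfl⟩
    rw [div_le_iff₀ (by positivity), Real.sqrt_le_left (by positivity), mul_pow]
    rcases min_choice ‖u‖ ‖v‖ with huv | huv <;> rw [huv]
    · exact (minSqSum_le_left a u v).trans (h u)
    · exact (minSqSum_le_right a u v).trans (h v)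

lemma bddAbove_ratioSet (a : Fin m → E2) : BddAbove (ratioSet a) := by
  refine ⟨√(∑ j, ‖a j‖ ^ 2), (forall_mem_ratioSet_le_iff (Real.sqrt_nonneg _)).2 fun u => ?_⟩
  rw [Real.sq_sqrt (by positivity), Finset.sum_mul]
  refine Finset.sum_le_sum fun j _ => ?_
  rw [← mul_pow]
  exact sq_le_sq.2 ((abs_real_inner_le_norm _ _).trans (le_abs_self _))

theorem lipU_le_iff (hc : 0 ≤ c) :
    lipU a ≤ c ↔ ∀ u, ∑ j, ⟪a j, u⟫ ^ 2 ≤ c ^ 2 * ‖u‖ ^ 2 :=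
  (csSup_le_iff (bddAbove_ratioSet a) (ratioSet_nonempty a)).trans (forall_mem_ratioSet_le_iff hc)

lemma exists_abs_le_one_norm_smul_eq {E : Type*} [NormedAddCommGroup E] [NormedSpace ℝ E] {u : E}
    {ρ : ℝ} (hρ : 0 ≤ ρ) (hρu : ρ ≤ ‖u‖) : ∃ t : ℝ, |t| ≤ 1 ∧ ‖t • u‖ = ρ := by
  refine ⟨ρ / ‖u‖, ?_, ?_⟩
  · rw [abs_of_nonneg (by positivity)]
    exact div_le_one_of_le₀ hρu (norm_nonneg u)
  · rw [norm_smul, Real.norm_of_nonneg (by positivity)]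
    exact div_mul_cancel_of_imp fun hu => le_antisymm (hρu.trans hu.le) hρ

theorem le_lipL_iff_of_norm_eq (hc : 0 ≤ c) :
    c ≤ lipL a ↔ ∀ u v : E2, ‖u‖ = ‖v‖ → c ^ 2 * ‖u‖ ^ 2 ≤ minSqSum a u v := by
  rw [le_lipL_iff hc]
  refine ⟨fun h u v huv => by simpa [huv] using h u v, fun h u v => ?_⟩
  have hmin : 0 ≤ min ‖u‖ ‖v‖ := by positivity
  obtain ⟨s, hs, hsu⟩ := exists_abs_le_one_norm_smul_eq hmin (min_le_left ‖u‖ ‖v‖)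
  obtain ⟨t, ht, htv⟩ := exists_abs_le_one_norm_smul_eq hmin (min_le_right ‖u‖ ‖v‖)
  calc c ^ 2 * min ‖u‖ ‖v‖ ^ 2 = c ^ 2 * ‖s • u‖ ^ 2 := by rw [hsu]
    _ ≤ minSqSum a (s • u) (t • v) := h _ _ (hsu.trans htv.symm)
    _ ≤ minSqSum a u v := minSqSum_smul_smul_le a u v hs ht

end Lipschitz

section TightLipschitz

variable {m : ℕ} {b : Fin m → E2}

lemma minSqSum_eq_of_sum_csq_eq_zero (h : ∑ j, csq (b j) = 0) {u v : E2} (huv : ‖u‖ = ‖v‖) :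
    minSqSum b u v =
      (perimeter (csq ∘ b) * ‖u‖ ^ 2 - zonoSupport (csq ∘ b) (csq u - csq v) / 2) / 2 := by
  have hmin (j : Fin m) : min (⟪b j, u⟫ ^ 2) (⟪b j, v⟫ ^ 2) =
      (⟪b j, u⟫ ^ 2 + ⟪b j, v⟫ ^ 2) / 2 - |⟪csq (b j), csq u - csq v⟫| / 4 := by
    rw [inner_sub_right, inner_sq_eq_half_add_inner_csq, inner_sq_eq_half_add_inner_csq, huv]
    grind
  simp only [minSqSum, hmin, Finset.sum_sub_distrib, ← Finset.sum_div, Finset.sum_add_distrib,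
    sum_inner_sq_eq_of_sum_csq_eq_zero h, zonoSupport_apply, Function.comp_apply, huv]
  ring

theorem lipU_eq_of_sum_csq_eq_zero (h : ∑ j, csq (b j) = 0) :
    lipU b = √(perimeter (csq ∘ b) / 2) := by
  refine le_antisymm ((lipU_le_iff (Real.sqrt_nonneg _)).2 fun u => ?_)
    (Real.sqrt_le_iff.2 ⟨lipU_nonneg b, ?_⟩)
  · have := perimeter_nonneg (csq ∘ b)
    rw [sum_inner_sq_eq_of_sum_csq_eq_zero h, Real.sq_sqrt (by positivity)]
  · obtain ⟨u, hu⟩ := exists_norm_eq E2 zero_le_one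
    have := (lipU_le_iff (lipU_nonneg b)).1 le_rfl u
    simpa [sum_inner_sq_eq_of_sum_csq_eq_zero h, hu] using this

theorem lipL_eq_of_sum_csq_eq_zero (h : ∑ j, csq (b j) = 0) :
    lipL b = √((perimeter (csq ∘ b) - zonoRadius (csq ∘ b)) / 2) := by
  set P := perimeter (csq ∘ b)
  set D := zonoRadius (csq ∘ b)
  have hDP : D ≤ P := zonoRadius_le_perimeter _
  refine le_antisymm (Real.le_sqrt_of_sq_le ?_)
    ((le_lipL_iff_of_norm_eq (Real.sqrt_nonneg _)).2 fun u v huv => ?_)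
  · have hsupport (w : E2) (hw : ‖w‖ = 1) : zonoSupport (csq ∘ b) w ≤ P - 2 * lipL b ^ 2 := by
      obtain ⟨u, hu, huw⟩ := exists_norm_eq_one_csq_eq hw
      obtain ⟨v, hv, hvw⟩ := exists_norm_eq_one_csq_eq ((norm_neg w).trans hw)
      have hL := (le_lipL_iff_of_norm_eq (lipL_nonneg b)).1 le_rfl u v (hu.trans hv.symm)
      have hdiff : w - -w = (2 : ℝ) • w := by module
      rw [minSqSum_eq_of_sum_csq_eq_zero h (hu.trans hv.symm), huw, hvw, hu, hdiff,
        map_smul_eq_mul, Real.norm_of_nonneg zero_le_two] at hL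
      linarith
    obtain ⟨w, hw⟩ := exists_norm_eq E2 zero_le_one
    have hD : D ≤ P - 2 * lipL b ^ 2 :=
      zonoRadius_le ((apply_nonneg _ _).trans (hsupport w hw)) hsupport
    linarith
  · rw [Real.sq_sqrt (by linarith), minSqSum_eq_of_sum_csq_eq_zero h huv]
    have hsupport : zonoSupport (csq ∘ b) (csq u - csq v) ≤ D * (2 * ‖u‖ ^ 2) := by
      refine (zonoSupport_le_zonoRadius_mul_norm _ _).trans ?_
      gcongr
      · exact zonoRadius_nonneg _
      · rw [two_mul, ← norm_csq]
        nth_rw 2 [norm_csq]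
        rw [huv, ← norm_csq]
        exact norm_sub_le _ _
    linarith

theorem condNum_eq_of_isClosedPolygon (h : IsClosedPolygon (csq ∘ b)) :
    condNum b = ENNReal.ofReal (1 - 2 * rRatio (csq ∘ b)) ^ (-(1 / 2) : ℝ) := by
  have hsum : ∑ j, csq (b j) = 0 := h.sum_eq_zero
  rw [rRatio_eq_diamRatio, diamRatio, condNum, lipL_eq_of_sum_csq_eq_zero hsum,
    lipU_eq_of_sum_csq_eq_zero hsum, mul_div_assoc', mul_div_mul_left _ _ two_ne_zero]
  have hP := perimeter_pos h.ne_zero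
  set P := perimeter (csq ∘ b)
  set D := zonoRadius (csq ∘ b)
  have hratio : 1 - D / P = (P - D) / P := by rw [sub_div, div_self hP.ne']
  rw [hratio]
  rcases (show D ≤ P from zonoRadius_le_perimeter _).eq_or_lt with hDP | hDP
  · simp [hDP]
  · have hpos : 0 < P - D := sub_pos.2 hDP
    rw [if_neg (Real.sqrt_ne_zero'.2 (half_pos hpos)), ENNReal.ofReal_rpow_of_pos (by positivity),
      Real.rpow_neg (by positivity), ← Real.sqrt_eq_rpow, ← Real.sqrt_div (by positivity),
      ← Real.sqrt_inv, inv_div, div_div_div_cancel_right₀ two_ne_zero]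

end TightLipschitz

section Tightening

theorem exists_linearMap_norm_apply_eq {E F : Type*} [NormedAddCommGroup E] [InnerProductSpace ℝ E]
    [FiniteDimensional ℝ E] [NormedAddCommGroup F] [InnerProductSpace ℝ F] {A : E →ₗ[ℝ] F}
    (hA : Function.Injective A) : ∃ T : E →ₗ[ℝ] E, ∀ x, ‖A (T x)‖ = ‖x‖ := by
  let iso : E ≃ₗᵢ[ℝ] LinearMap.range A := (stdOrthonormalBasis ℝ E).equiv
    (stdOrthonormalBasis ℝ (LinearMap.range A)) (finCongr (LinearMap.finrank_range_of_inj hA).symm)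
  let inv : LinearMap.range A ≃ₗ[ℝ] E := (LinearEquiv.ofInjective A hA).symm
  refine ⟨inv.toLinearMap ∘ₗ iso.toLinearEquiv.toLinearMap, fun x => ?_⟩
  have hinv : A (inv (iso x)) = iso x :=
    congrArg Subtype.val ((LinearEquiv.ofInjective A hA).apply_symm_apply (iso x))
  exact (congrArg norm hinv).trans (iso.norm_map x)

lemma exists_linearMap_sum_inner_sq_eq {ι E : Type*} [Fintype ι] [NormedAddCommGroup E]
    [InnerProductSpace ℝ E] [FiniteDimensional ℝ E] {M : ι → E}
    (hM : ∀ x, ∑ j, ⟪M j, x⟫ ^ 2 = 0 → x = 0) :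
    ∃ T : E →ₗ[ℝ] E, ∀ x, ∑ j, ⟪M j, T x⟫ ^ 2 = ‖x‖ ^ 2 := by
  let A : E →ₗ[ℝ] EuclideanSpace ℝ ι :=
    (WithLp.linearEquiv 2 ℝ (ι → ℝ)).symm.toLinearMap ∘ₗ LinearMap.pi fun j => innerₛₗ ℝ (M j)
  have hA (x : E) : ‖A x‖ ^ 2 = ∑ j, ⟪M j, x⟫ ^ 2 := by simp [A, EuclideanSpace.norm_sq_eq]
  have hinj : Function.Injective A :=
    (injective_iff_map_eq_zero A).2 fun x hx => hM x (by rw [← hA, hx]; simp)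
  obtain ⟨T, hT⟩ := exists_linearMap_norm_apply_eq hinj
  exact ⟨T, fun x => by rw [← hA, hT]⟩

variable {m : ℕ}

lemma condNum_le_ofReal_div {b : Fin m → E2} {c d : ℝ} (hc : 0 < c) (hL : c ≤ lipL b)
    (hU : lipU b ≤ d) : condNum b ≤ ENNReal.ofReal (d / c) := by
  rw [condNum, if_neg (hc.trans_le hL).ne']
  have hd : 0 ≤ d := (lipU_nonneg b).trans hU
  gcongr

lemma lipL_sq_mul_norm_sq_le (a : Fin m → E2) (x : E2) :
    lipL a ^ 2 * ‖x‖ ^ 2 ≤ ∑ j, ⟪a j, x⟫ ^ 2 := by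
  rw [← minSqSum_self]
  exact (le_lipL_iff_of_norm_eq (lipL_nonneg a)).1 le_rfl x x rfl

lemma sum_inner_sq_le_lipU_sq_mul_norm_sq (a : Fin m → E2) (x : E2) :
    ∑ j, ⟪a j, x⟫ ^ 2 ≤ lipU a ^ 2 * ‖x‖ ^ 2 :=
  (lipU_le_iff (lipU_nonneg a)).1 le_rfl x

lemma lipL_le_lipU (a : Fin m → E2) : lipL a ≤ lipU a :=
  Real.sInf_le_sSup _ ⟨0, fun _ => nonneg_of_mem_ratioSet⟩ (bddAbove_ratioSet a)

lemma lipL_div_lipU_le_lipL_of_inner_eq {M b : Fin m → E2} {T : E2 → E2} (hU : 0 < lipU M)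
    (hT : ∀ x, ∑ j, ⟪M j, T x⟫ ^ 2 = ‖x‖ ^ 2) (hb : ∀ j x, ⟪b j, x⟫ = ⟪M j, T x⟫) :
    lipL M / lipU M ≤ lipL b := by
  have hexpand (x : E2) : ‖x‖ ≤ lipU M * ‖T x‖ := by
    have := sum_inner_sq_le_lipU_sq_mul_norm_sq M (T x)
    rw [hT, ← mul_pow] at this
    exact le_of_sq_le_sq this (by positivity)
  refine (le_lipL_iff (div_nonneg (lipL_nonneg M) hU.le)).2 fun u v => ?_
  have hmin : min ‖u‖ ‖v‖ ≤ lipU M * min ‖T u‖ ‖T v‖ := by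
    rw [mul_min_of_nonneg _ _ hU.le]
    exact min_le_min (hexpand u) (hexpand v)
  calc (lipL M / lipU M) ^ 2 * min ‖u‖ ‖v‖ ^ 2
      ≤ (lipL M / lipU M) ^ 2 * (lipU M * min ‖T u‖ ‖T v‖) ^ 2 := by gcongr
    _ = lipL M ^ 2 * min ‖T u‖ ‖T v‖ ^ 2 := by field_simp
    _ ≤ minSqSum M (T u) (T v) := (le_lipL_iff (lipL_nonneg M)).1 le_rfl _ _
    _ = minSqSum b u v := by simp only [minSqSum, hb]

theorem exists_isClosedPolygon_condNum_le {M : Fin m → E2} (hM : lipL M ≠ 0) :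
    ∃ b : Fin m → E2, IsClosedPolygon (csq ∘ b) ∧ condNum b ≤ condNum M := by
  have hL : 0 < lipL M := (lipL_nonneg M).lt_of_ne' hM
  have hU : 0 < lipU M := hL.trans_le (lipL_le_lipU M)
  obtain ⟨T, hT⟩ := exists_linearMap_sum_inner_sq_eq (M := M) fun x hx => by
    have := lipL_sq_mul_norm_sq_le M x
    rw [hx, ← mul_pow, sq_nonpos_iff, mul_eq_zero_iff_left hL.ne'] at this
    exact norm_eq_zero.1 this
  let b : Fin m → E2 := fun j => T.adjoint (M j)
  have hb (j : Fin m) (x : E2) : ⟪b j, x⟫ = ⟪M j, T x⟫ := T.adjoint_inner_left x (M j)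
  have htight (x : E2) : ∑ j, ⟪b j, x⟫ ^ 2 = 1 * ‖x‖ ^ 2 := by simp only [hb, hT, one_mul]
  refine ⟨b, ⟨sum_csq_eq_zero_of_forall_sum_inner_sq_eq htight, fun h0 => ?_⟩, ?_⟩
  · obtain ⟨x, hx⟩ := exists_norm_eq E2 zero_le_one
    have hb0 (j : Fin m) : b j = 0 := by
      rw [← norm_eq_zero, ← pow_eq_zero_iff two_ne_zero, ← norm_csq, norm_eq_zero]
      exact congrFun h0 j
    have := htight x
    simp [hb0, hx] at this
  · have hLb := lipL_div_lipU_le_lipL_of_inner_eq hU hT hb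
    have hUb : lipU b ≤ 1 := (lipU_le_iff zero_le_one).2 fun u => by rw [htight, one_pow]
    have hcond : condNum M = ENNReal.ofReal (lipU M / lipL M) := if_neg hM
    rw [hcond, ← one_div_div]
    exact condNum_le_ofReal_div (div_pos hL hU) hLb hUb

lemma ofReal_one_sub_rpow_neg_half_le_iff {g g' : ℝ} (hg : g ≤ 1) :
    ENNReal.ofReal (1 - g) ^ (-(1 / 2) : ℝ) ≤ ENNReal.ofReal (1 - g') ^ (-(1 / 2) : ℝ) ↔
      g ≤ g' := by
  rw [ENNReal.rpow_neg, ENNReal.rpow_neg, ENNReal.inv_le_inv,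
    ENNReal.rpow_le_rpow_iff one_half_pos, ENNReal.ofReal_le_ofReal_iff (sub_nonneg.2 hg),
    sub_le_sub_iff_left]

lemma condNum_le_condNum_iff {a b : Fin m → E2} (ha : IsClosedPolygon (csq ∘ a))
    (hb : IsClosedPolygon (csq ∘ b)) :
    condNum a ≤ condNum b ↔ rRatio (csq ∘ a) ≤ rRatio (csq ∘ b) := by
  rw [condNum_eq_of_isClosedPolygon ha, condNum_eq_of_isClosedPolygon hb,
    ofReal_one_sub_rpow_neg_half_le_iff (two_mul_rRatio_le_one _), mul_le_mul_iff_right₀ two_pos]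

theorem condNum_eq_iInf_iff {a : Fin m → E2} (ha : IsClosedPolygon (csq ∘ a)) :
    condNum a = ⨅ M : Fin m → E2, condNum M ↔
      IsMinOn rRatio {e | IsClosedPolygon e} (csq ∘ a) := by
  constructor
  · intro hinf
    refine isMinOn_iff.2 fun e he => ?_
    obtain ⟨b, rfl⟩ := csq_surjective.comp_left e
    exact (condNum_le_condNum_iff ha he).1 (hinf.trans_le (iInf_le _ b))
  · intro hmin
    refine le_antisymm (le_iInf fun M => ?_) (iInf_le _ a)
    by_cases hM : lipL M = 0
    · rw [condNum, condNum, if_pos hM]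
      exact le_top
    · obtain ⟨b, hb, hbM⟩ := exists_isClosedPolygon_condNum_le hM
      exact ((condNum_le_condNum_iff ha hb).2 (isMinOn_iff.1 hmin _ hb)).trans hbM

end Tightening

theorem stmt6_general {m : ℕ} (hm : m ≠ 0) (a : Fin m → E2) :
    (((∃ C : ℝ, 0 < C ∧ ∑ j, Matrix.vecMulVec (toFun2 (a j)) (toFun2 (a j)) =
          C • (1 : Matrix (Fin 2) (Fin 2) ℝ)) ∧
        condNum a = ⨅ M : Fin m → E2, condNum M) ↔
      IsOptimalEdgeFamily (fun j => csq (a j))) ∧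
    (IsOptimalEdgeFamily (fun j => csq (a j)) →
      condNum a =
        ENNReal.ofReal (1 - 2 * rRatio (fun j => csq (a j))) ^ (-(1 / 2) : ℝ)) := by
  constructor
  · rw [isOptimalEdgeFamily_iff hm, exists_sum_vecMulVec_eq_smul_one_iff]
    exact and_congr_right condNum_eq_iInf_iff
  · intro hopt
    exact condNum_eq_of_isClosedPolygon ((isOptimalEdgeFamily_iff hm).1 hopt).1

/-- For `a_1,…,a_m` in the upper half-plane
`T = {t·(cos φ, sin φ) : t ≥ 0, φ ∈ (0,π]}`, the family is an optimal tight frame (a tight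
frame whose matrix attains the minimal condition number) if and only if the complex squares
`f(a_1),…,f(a_m)` form an optimal edge family (the edge vectors of an optimal strictly
convex `m`-gon); in either case `β_A = (1 − 2·r)^{−1/2}`. -/
theorem stmt6 {m : ℕ} (hm : 3 ≤ m) (a : Fin m → E2)
    (hT : ∀ j, ∃ t φ : ℝ, 0 ≤ t ∧ 0 < φ ∧ φ ≤ π ∧
      a j = t • vec2 (Real.cos φ) (Real.sin φ)) :
    (((∃ C : ℝ, 0 < C ∧ ∑ j, Matrix.vecMulVec (toFun2 (a j)) (toFun2 (a j)) =
          C • (1 : Matrix (Fin 2) (Fin 2) ℝ)) ∧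
        condNum a = ⨅ M : Fin m → E2, condNum M) ↔
      IsOptimalEdgeFamily (fun j => csq (a j))) ∧
    (IsOptimalEdgeFamily (fun j => csq (a j)) →
      condNum a =
        ENNReal.ofReal (1 - 2 * rRatio (fun j => csq (a j))) ^ (-(1 / 2) : ℝ)) :=
  stmt6_general (by omega) a
end
end
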